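/- Let n ≥ 1 and C₂ ≥ 1 be real numbers, let y ≥ 1 be real, and let x be a real number with 0 < x, x ≤ C₂·y^(1/n), and x ≤ y/2. Then (y − x)^(1 − 1/(2n)) + 2·√C₂·√x ≥ y^(1 − 1/(2n)). -/

import Mathlib

/-! Put `q = 1 / (2n)` and write `t ^ (1 - q) = t * t ^ (-q)`. The weight `t ^ (-q)` is decreasing,
so passing from `y` to `y - x` costs at most `x * y ^ (-q)`. The hypothesis `x ≤ C * y ^ (2q)` says
exactly that `y ^ (-q) ≤ √(C / x)`, so this cost is at most `√(C * x)`. -/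

theorem div_rpow_le_rpow_one_sub {a b q : ℝ} (ha : 0 ≤ a) (hab : a ≤ b) (hq : 0 ≤ q) :
    a / b ^ q ≤ a ^ (1 - q) := by
  rcases ha.eq_or_lt with rfl | ha_pos
  · simpa using Real.rpow_nonneg le_rfl (1 - q)
  · rw [Real.rpow_sub ha_pos, Real.rpow_one]
    gcongr

theorem rpow_one_sub_le_sub_rpow_add_div {x y q : ℝ} (hx : 0 ≤ x) (hxy : x ≤ y) (hq : 0 ≤ q) :
    y ^ (1 - q) ≤ (y - x) ^ (1 - q) + x / y ^ q := by
  rcases hx.eq_or_lt with rfl | hx_pos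
  · simp
  · calc
      y ^ (1 - q) = y / y ^ q := by rw [Real.rpow_sub (hx_pos.trans_le hxy), Real.rpow_one]
      _ = (y - x) / y ^ q + x / y ^ q := by rw [← add_div, sub_add_cancel]
      _ ≤ (y - x) ^ (1 - q) + x / y ^ q := by
        gcongr
        exact div_rpow_le_rpow_one_sub (sub_nonneg.2 hxy) (sub_le_self y hx) hq

theorem div_le_sqrt_mul_sqrt_of_le_mul_sq {x C s : ℝ} (hx : 0 ≤ x) (h : x ≤ C * s ^ 2) :
    x / s ≤ √C * √x := by
  rcases eq_or_ne s 0 with rfl | hs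
  · rw [div_zero]
    positivity
  · rw [← Real.sqrt_mul' C hx]
    apply Real.le_sqrt_of_sq_le
    calc
      (x / s) ^ 2 = x / s ^ 2 * x := by ring
      _ ≤ C * x := by
        gcongr
        exact (div_le_iff₀ (by positivity)).2 h

theorem lookback_lower_bound_step_general {x y C q : ℝ} (hq : 0 ≤ q) (hx : 0 ≤ x)
    (hxy : x ≤ y) (hxC : x ≤ C * y ^ (2 * q)) :
    y ^ (1 - q) ≤ (y - x) ^ (1 - q) + √C * √x := by
  have rpow_two_mul : y ^ (2 * q) = (y ^ q) ^ 2 := by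
    rw [mul_comm, Real.rpow_mul (hx.trans hxy), Real.rpow_two]
  calc
    y ^ (1 - q) ≤ (y - x) ^ (1 - q) + x / y ^ q := rpow_one_sub_le_sub_rpow_add_div hx hxy hq
    _ ≤ (y - x) ^ (1 - q) + √C * √x := by
      gcongr
      exact div_le_sqrt_mul_sqrt_of_le_mul_sq hx (rpow_two_mul ▸ hxC)

/-- The induction-step inequality in the proof of Proposition 5.1 of the paper
(limits of the history-lookback technique). -/
theorem lookback_lower_bound_step (n C₂ : ℝ) (hn : 1 ≤ n) (hC₂ : 1 ≤ C₂)
    (y : ℝ) (hy : 1 ≤ y) (x : ℝ) (hx : 0 < x)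
    (hx₁ : x ≤ C₂ * y ^ (1 / n)) (hx₂ : x ≤ y / 2) :
    (y - x) ^ (1 - 1 / (2 * n)) + 2 * Real.sqrt C₂ * Real.sqrt x ≥
      y ^ (1 - 1 / (2 * n)) := by
  have hxC : x ≤ C₂ * y ^ (2 * (1 / (2 * n))) := by convert hx₁ using 3; ring
  linarith [lookback_lower_bound_step_general (by positivity) hx.le (by linarith) hxC,
    mul_nonneg (Real.sqrt_nonneg C₂) (Real.sqrt_nonneg x)]
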